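/- Let L be a symmetric positive semidefinite real n×n matrix such that I − L is also positive semidefinite, let P = I − L, and let E(H) = trace(Hᵀ L H). Let λ₀ be a real number with 0 < λ₀ ≤ 1 such that every nonzero eigenvalue of L is at least λ₀. Then for every real n×d matrix X and every natural number l, E(P^l X) ≤ (1 − λ₀)^l · trace(Xᵀ L P^l X). -/

import Mathlib

open Matrix BigOperators

/-!
Both traces have the form `trace (Xᴴ * A * X)`, which is monotone in `A` for the Loewner order, so
it is enough to compare `P ^ l * L * P ^ l` with `(1 - λ₀) ^ l • (L * P ^ l)`. These are polynomials
in `L`, so by the functional calculus they compare as `(1 - x) ^ l * x * (1 - x) ^ l` and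
`(1 - λ₀) ^ l * (x * (1 - x) ^ l)` do on the spectrum of `L`: both vanish at `x = 0`, and
elsewhere `0 ≤ 1 - x ≤ 1 - λ₀`.
-/

theorem one_sub_pow_mul_mul_one_sub_pow_le {R : Type*} [CommRing R] [PartialOrder R]
    [IsOrderedRing R] {x r : R} (hx₀ : 0 ≤ x) (hx₁ : x ≤ 1) (hr : x ≠ 0 → r ≤ x) (l : ℕ) :
    (1 - x) ^ l * x * (1 - x) ^ l ≤ (1 - r) ^ l * (x * (1 - x) ^ l) := by
  have h_one_sub : 0 ≤ 1 - x := sub_nonneg.2 hx₁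
  rcases eq_or_ne x 0 with rfl | hx
  · simp
  · calc (1 - x) ^ l * x * (1 - x) ^ l = (1 - x) ^ l * (x * (1 - x) ^ l) := mul_assoc ..
      _ ≤ (1 - r) ^ l * (x * (1 - x) ^ l) := by
        gcongr
        exact hr hx

section FunctionalCalculus

open Polynomial

variable {A : Type*} [TopologicalSpace A] [Ring A] [StarRing A] [PartialOrder A]
  [StarOrderedRing A] [Algebra ℝ A] [ContinuousFunctionalCalculus ℝ A IsSelfAdjoint]

theorem aeval_le_aeval_of_forall_spectrum_eval_le {a : A} (ha : IsSelfAdjoint a) {p q : ℝ[X]}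
    (h : ∀ x ∈ spectrum ℝ a, p.eval x ≤ q.eval x) : aeval a p ≤ aeval a q := by
  rw [← cfc_polynomial p a, ← cfc_polynomial q a]
  exact cfc_mono h

variable [NonnegSpectrumClass ℝ A]

theorem one_sub_pow_mul_mul_one_sub_pow_le_smul {a : A} (ha₀ : 0 ≤ a) (ha₁ : a ≤ 1) {r : ℝ}
    (hr : ∀ x ∈ spectrum ℝ a, x ≠ 0 → r ≤ x) (l : ℕ) :
    (1 - a) ^ l * a * (1 - a) ^ l ≤ (1 - r) ^ l • (a * (1 - a) ^ l) := by
  have h_le_one : ∀ x ∈ spectrum ℝ a, x ≤ 1 := (CFC.le_one_iff a).1 ha₁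
  have h_aeval : aeval a ((1 - X) ^ l * X * (1 - X) ^ l : ℝ[X]) ≤
      aeval a ((1 - r) ^ l • (X * (1 - X) ^ l) : ℝ[X]) := by
    refine aeval_le_aeval_of_forall_spectrum_eval_le (.of_nonneg ha₀) fun x hx ↦ ?_
    simpa using one_sub_pow_mul_mul_one_sub_pow_le (spectrum_nonneg_of_nonneg ha₀ hx)
      (h_le_one x hx) (hr x hx) l
  simpa using h_aeval

end FunctionalCalculus

section Matrix

open scoped ComplexOrder MatrixOrder

variable {𝕜 m n : Type*} [RCLike 𝕜] [Fintype m] [Fintype n]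

theorem trace_conjTranspose_mul_mul_mono {A B : Matrix n n 𝕜} (h : A ≤ B) (X : Matrix n m 𝕜) :
    (Xᴴ * A * X).trace ≤ (Xᴴ * B * X).trace := by
  have h_nonneg : 0 ≤ (Xᴴ * (B - A) * X).trace :=
    ((Matrix.le_iff.1 h).conjTranspose_mul_mul_same X).trace_nonneg
  rwa [Matrix.mul_sub, Matrix.sub_mul, trace_sub, sub_nonneg] at h_nonneg

theorem energy_le_scaled_cross_term_general [DecidableEq n] {L : Matrix n n 𝕜}
    (hL : L.PosSemidef) (hIL : (1 - L).PosSemidef) {r : ℝ}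
    (hspec : ∀ μ ∈ spectrum ℝ L, μ ≠ 0 → r ≤ μ) (X : Matrix n m 𝕜) (l : ℕ) :
    (((1 - L) ^ l * X)ᴴ * L * ((1 - L) ^ l * X)).trace ≤
      (1 - r) ^ l • (Xᴴ * L * ((1 - L) ^ l * X)).trace := by
  have h_pow : ((1 - L) ^ l)ᴴ = (1 - L) ^ l := (hIL.isHermitian.pow l).eq
  calc (((1 - L) ^ l * X)ᴴ * L * ((1 - L) ^ l * X)).trace
      = (Xᴴ * ((1 - L) ^ l * L * (1 - L) ^ l) * X).trace := by
        simp only [conjTranspose_mul, h_pow, Matrix.mul_assoc]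
    _ ≤ (Xᴴ * ((1 - r) ^ l • (L * (1 - L) ^ l)) * X).trace :=
        trace_conjTranspose_mul_mul_mono (one_sub_pow_mul_mul_one_sub_pow_le_smul
          hL.nonneg (Matrix.le_iff.2 hIL) hspec l) X
    _ = (1 - r) ^ l • (Xᴴ * L * ((1 - L) ^ l * X)).trace := by
        simp only [Matrix.mul_smul, Matrix.smul_mul, trace_smul, Matrix.mul_assoc]

end Matrix

/-- `E(P^l X) ≤ (1 − λ₀)^l · trace(Xᵀ L P^l X)` when `L` and `I − L` are PSD,
`P = I − L`, and every nonzero eigenvalue of `L` is at least `λ₀ ∈ (0,1]`. -/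
theorem energy_le_scaled_cross_term (n d : ℕ) (L : Matrix (Fin n) (Fin n) ℝ)
    (hL : L.PosSemidef) (hIL : ((1 : Matrix (Fin n) (Fin n) ℝ) - L).PosSemidef)
    (P : Matrix (Fin n) (Fin n) ℝ) (hP : P = 1 - L)
    (lam0 : ℝ) (hlam0 : 0 < lam0) (hlam1 : lam0 ≤ 1)
    (hspec : ∀ μ ∈ spectrum ℝ L, μ ≠ 0 → lam0 ≤ μ)
    (X : Matrix (Fin n) (Fin d) ℝ) (l : ℕ) :
    ((P ^ l * X)ᵀ * L * (P ^ l * X)).trace ≤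
      (1 - lam0) ^ l * (Xᵀ * L * (P ^ l * X)).trace := by
  subst hP
  simpa only [conjTranspose_eq_transpose_of_trivial, smul_eq_mul] using
    energy_le_scaled_cross_term_general hL hIL hspec X l
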